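/- Pohozaev-type identity: let g : ℝ → ℝ be continuous with G(s) = ∫_1^s g(σ) dσ, and let u be a C¹ function on an interval I ⊂ (0,∞) such that v(r) := r^{N-1} φ_p(u'(r)) is differentiable on I with v'(r) = -r^{N-1} g(u(r)). Then for every a ∈ ℝ the function r ↦ r^N (|u'(r)|^p/p' + G(u(r))) + a r^{N-1} u(r) φ_p(u'(r)) is differentiable on I with derivative equal to r^{N-1} [ (1 - N/p + a) |u'(r)|^p + N G(u(r)) - a g(u(r)) u(r) ]. -/

import Mathlib

open Real Set Filter Topology

noncomputable def phip (p s : ℝ) : ℝ := |s| ^ (p - 2) * s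

def Freg (f : ℝ → ℝ) : Prop :=
  ContinuousOn f (Ici 0) ∧ ContDiffOn ℝ 1 f (Ioi 0)

def Feq (f : ℝ → ℝ) : Prop :=
  f 0 = 0 ∧ f 1 = 0 ∧ (∀ s : ℝ, 0 < s → s < 1 → f s < 0) ∧ (∀ s : ℝ, 1 < s → 0 < f s)

def Fzero (p : ℝ) (f : ℝ → ℝ) : Prop :=
  ∃ c : ℝ, ∀ᶠ s in 𝓝[>] (0:ℝ), c ≤ f s / s ^ (p - 1)

noncomputable def pstar (p : ℝ) (N : ℕ) : EReal :=
  if p < (N:ℝ) then (((N:ℝ) * p / ((N:ℝ) - p) : ℝ) : EReal) else ⊤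

noncomputable def fstar (f : ℝ → ℝ) (s : ℝ) : ℝ := sSup (f '' Icc 1 s)

noncomputable def Fint (f : ℝ → ℝ) (s : ℝ) : ℝ := ∫ σ in (1:ℝ)..s, f σ

def Fsubl (p : ℝ) (f : ℝ → ℝ) : Prop :=
  ∃ M : ℝ, 0 < M ∧ ∀ ε > 0, ∀ᶠ s in atTop, f s / s ^ (p - 1) ≤ M + ε

def FsubcWith (p : ℝ) (N : ℕ) (f : ℝ → ℝ) (η : ℝ) : Prop :=
  (∀ c : ℝ, ∃ᶠ s in atTop, c < f s / s ^ (p - 1)) ∧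
  0 < η ∧ η < 1 ∧
  ∃ L : ℝ, (L : EReal) < pstar p N ∧
    ∀ᶠ s in atTop, fstar f s * s / Fint f (η * s) ≤ L

def Fsubc (p : ℝ) (N : ℕ) (f : ℝ → ℝ) : Prop := ∃ η : ℝ, FsubcWith p N f η

/-- A radial solution of the Neumann problem on `[R1,R2]`. -/
def NeumannSol (p : ℝ) (N : ℕ) (R1 R2 : ℝ) (f u : ℝ → ℝ) : Prop :=
  (∀ x ∈ Icc R1 R2, DifferentiableAt ℝ u x) ∧
  ContinuousOn (deriv u) (Icc R1 R2) ∧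
  (∀ x ∈ Icc R1 R2, 0 < u x) ∧
  deriv u R1 = 0 ∧ deriv u R2 = 0 ∧
  ContinuousOn (fun x => x ^ (N - 1) * phip p (deriv u x)) (Icc R1 R2) ∧
  ∀ x ∈ Ioc R1 R2,
    HasDerivAt (fun t => t ^ (N - 1) * phip p (deriv u t)) (-(x ^ (N - 1)) * f (u x)) x

noncomputable def fhat (f : ℝ → ℝ) (s : ℝ) : ℝ := if 0 ≤ s then f s else 0

noncomputable def Fhat (f : ℝ → ℝ) (s : ℝ) : ℝ := ∫ σ in (1:ℝ)..s, fhat f σ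

/-- A solution of the Cauchy problem with datum `d`, for the nonlinearity `g`. -/
def CauchySol (p : ℝ) (N : ℕ) (R1 R2 : ℝ) (g u : ℝ → ℝ) (d : ℝ) : Prop :=
  (∀ x ∈ Icc R1 R2, DifferentiableAt ℝ u x) ∧
  ContinuousOn (deriv u) (Icc R1 R2) ∧
  u R1 = d ∧ deriv u R1 = 0 ∧
  ContinuousOn (fun x => x ^ (N - 1) * phip p (deriv u x)) (Icc R1 R2) ∧
  ∀ x ∈ Ioc R1 R2,
    HasDerivAt (fun t => t ^ (N - 1) * phip p (deriv u t)) (-(x ^ (N - 1)) * g (u x)) x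

noncomputable def rOne (R1 R2 : ℝ) (u : ℝ → ℝ) : ℝ :=
  sSup {x | x ∈ Icc R1 R2 ∧ ∀ s ∈ Ico R1 x, 0 < u s}

noncomputable def rZero (R2 η d : ℝ) (u : ℝ → ℝ) : ℝ :=
  sSup {x | x ∈ Icc 0 R2 ∧ ∀ s ∈ Ico 0 x, η * d < u s}

noncomputable def energy (p : ℝ) (f u : ℝ → ℝ) (x : ℝ) : ℝ :=
  |deriv u x| ^ p / (p / (p - 1)) + Fhat f (u x)

def NonConstOn (R1 R2 : ℝ) (u : ℝ → ℝ) : Prop :=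
  ∃ x ∈ Icc R1 R2, ∃ x' ∈ Icc R1 R2, u x ≠ u x'

def DistinctOn (R1 R2 : ℝ) (u v : ℝ → ℝ) : Prop :=
  ∃ x ∈ Icc R1 R2, u x ≠ v x

noncomputable def nOverPstar (p : ℝ) (N : ℕ) : ℝ :=
  if p < (N:ℝ) then ((N:ℝ) - p) / p else 0

/-!
Along a solution the energy `E = |u'| ^ p / p' + G(u)` is dissipated at the rate
`E' = -((N - 1) / r) |u'| ^ p`. The identity is the sum of `(r ^ N E)' = N r ^ (N - 1) E + r ^ N E'`
and `a` times `(u v)' = u' v - r ^ (N - 1) u g(u)`, where `v = r ^ (N - 1) φ_p(u')`.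
Though `u'` need not be differentiable, `E` is, because `|u'| ^ p = |φ_p(u')| ^ p'`.
-/

section DualityMap

variable {p q : ℝ}

theorem abs_phip (hp : p ≠ 1) (s : ℝ) : |phip p s| = |s| ^ (p - 1) := by
  rcases eq_or_ne s 0 with rfl | hs
  · simp [phip, zero_rpow (sub_ne_zero.2 hp)]
  · rw [phip, abs_mul, abs_of_nonneg (by positivity), ← rpow_add_one (abs_ne_zero.2 hs)]
    ring_nf

theorem mul_phip_self (hp : p ≠ 0) (s : ℝ) : s * phip p s = |s| ^ p := by
  rcases eq_or_ne s 0 with rfl | hs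
  · simp [zero_rpow hp]
  · calc s * phip p s = |s| ^ (p - 2) * s ^ 2 := by rw [phip]; ring
      _ = |s| ^ (p - 2) * |s| ^ (2 : ℝ) := by rw [rpow_two, sq_abs]
      _ = |s| ^ p := by rw [← rpow_add (abs_pos.2 hs), sub_add_cancel]

theorem abs_phip_rpow_conj (hpq : p.HolderConjugate q) (s : ℝ) : |phip p s| ^ q = |s| ^ p := by
  rw [abs_phip hpq.lt.ne', ← rpow_mul (abs_nonneg s), hpq.sub_one_mul_conj]

theorem phip_conj_phip (hpq : p.HolderConjugate q) (s : ℝ) : phip q (phip p s) = s := by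
  rcases eq_or_ne s 0 with rfl | hs
  · simp [phip]
  · have h_exp : (p - 1) * (q - 2) + (p - 2) = 0 := by linarith [hpq.mul_eq_add]
    calc phip q (phip p s) = |s| ^ ((p - 1) * (q - 2)) * (|s| ^ (p - 2) * s) := by
          rw [phip, abs_phip hpq.lt.ne', ← rpow_mul (abs_nonneg s), phip]
      _ = s := by
          rw [← mul_assoc, ← rpow_add (abs_pos.2 hs), h_exp, rpow_zero, one_mul]

theorem hasDerivAt_abs_rpow_div (hq : 1 < q) (y : ℝ) :
    HasDerivAt (fun z => |z| ^ q / q) (phip q y) y := by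
  refine ((hasDerivAt_abs_rpow y hq).div_const q).congr_deriv ?_
  rw [phip, mul_assoc, mul_div_cancel_left₀ _ (zero_lt_one.trans hq).ne']

theorem hasDerivWithinAt_abs_rpow_div_conj (hpq : p.HolderConjugate q) {w : ℝ → ℝ} {s : Set ℝ}
    {x φ' : ℝ} (hφ : HasDerivWithinAt (fun t => phip p (w t)) φ' s x) :
    HasDerivWithinAt (fun t => |w t| ^ p / q) (w x * φ') s x := by
  have h_comp := (hasDerivAt_abs_rpow_div hpq.symm.lt _).comp_hasDerivWithinAt x hφ
  simpa only [Function.comp_def, abs_phip_rpow_conj hpq, phip_conj_phip hpq] using h_comp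

end DualityMap

theorem hasDerivWithinAt_of_mul_left {𝕜 : Type*} [NontriviallyNormedField 𝕜] {ρ w : 𝕜 → 𝕜}
    {s : Set 𝕜} {x ρ' d : 𝕜} (hρx : ρ x ≠ 0) (hρ : HasDerivWithinAt ρ ρ' s x)
    (hρw : HasDerivWithinAt (fun t => ρ t * w t) d s x) :
    HasDerivWithinAt w ((d - ρ' * w x) / ρ x) s x := by
  have h_quot (t : 𝕜) (ht : ρ t ≠ 0) : w t = ρ t * w t / ρ t :=
    (mul_div_cancel_left₀ (w t) ht).symm
  have h_ne : ∀ᶠ t in 𝓝[s] x, ρ t ≠ 0 := hρ.continuousWithinAt.eventually_ne hρx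
  refine ((hρw.fun_div hρ hρx).congr_of_eventuallyEq (h_ne.mono h_quot)
    (h_quot x hρx)).congr_deriv ?_
  field_simp

section RadialEquation

variable {p q : ℝ} {g G u w : ℝ → ℝ} {s : Set ℝ} {x : ℝ}

theorem hasDerivWithinAt_abs_rpow_div_add_comp (hpq : p.HolderConjugate q) {ρ : ℝ → ℝ} {κ : ℝ}
    (hρx : ρ x ≠ 0) (hρ : HasDerivWithinAt ρ (κ * ρ x) s x)
    (hu : HasDerivWithinAt u (w x) s x) (hG : HasDerivAt G (g (u x)) (u x))
    (hode : HasDerivWithinAt (fun t => ρ t * phip p (w t)) (-ρ x * g (u x)) s x) :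
    HasDerivWithinAt (fun t => |w t| ^ p / q + G (u t)) (-κ * |w x| ^ p) s x := by
  -- Expanding the equation gives `φ' = -g(u) - κ φ` for `φ = phip p w`; multiplied by `w`, the
  -- first term cancels `(G ∘ u)'` and only the damping term survives.
  have h_phip : HasDerivWithinAt (fun t => phip p (w t)) (-g (u x) - κ * phip p (w x)) s x := by
    refine (hasDerivWithinAt_of_mul_left hρx hρ hode).congr_deriv ?_
    field_simp
  refine ((hasDerivWithinAt_abs_rpow_div_conj hpq h_phip).fun_add
    (hG.comp_hasDerivWithinAt x hu)).congr_deriv ?_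
  rw [← mul_phip_self hpq.ne_zero]
  ring

theorem stmt16_general (hpq : p.HolderConjugate q) (N : ℝ) (hx : 0 < x)
    (hu : HasDerivWithinAt u (w x) s x) (hG : HasDerivAt G (g (u x)) (u x))
    (hode : HasDerivWithinAt (fun t => t ^ (N - 1) * phip p (w t))
      (-(x ^ (N - 1)) * g (u x)) s x) (a : ℝ) :
    HasDerivWithinAt
      (fun t => t ^ N * (|w t| ^ p / q + G (u t)) + a * t ^ (N - 1) * u t * phip p (w t))
      (x ^ (N - 1) * ((1 - N / p + a) * |w x| ^ p + N * G (u x) - a * g (u x) * u x)) s x := by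
  have h_pow (b : ℝ) : HasDerivWithinAt (fun t : ℝ => t ^ b) (b * x ^ (b - 1)) s x :=
    (hasDerivAt_rpow_const (.inl hx.ne')).hasDerivWithinAt
  have h_weight : HasDerivWithinAt (fun t : ℝ => t ^ (N - 1)) ((N - 1) / x * x ^ (N - 1)) s x :=
    (h_pow (N - 1)).congr_deriv (by rw [rpow_sub_one hx.ne']; ring)
  have h_energy := hasDerivWithinAt_abs_rpow_div_add_comp hpq (by positivity) h_weight hu hG hode
  have h_sum := ((h_pow N).fun_mul h_energy).fun_add ((hu.fun_mul hode).const_mul a)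
  refine (h_sum.congr_deriv ?_).congr (fun t _ => by ring) (by ring)
  have h_xN : x ^ N = x ^ (N - 1) * x := by rw [← rpow_add_one hx.ne', sub_add_cancel]
  rw [h_xN, div_eq_mul_inv _ q, ← hpq.one_sub_inv, ← mul_phip_self hpq.ne_zero]
  field_simp
  ring

end RadialEquation

theorem stmt16 (p : ℝ) (hp : 1 < p) (N : ℕ) (hN : 1 ≤ N)
    (g : ℝ → ℝ) (hg : Continuous g)
    (I : Set ℝ) (hI : Convex ℝ I) (hIpos : I ⊆ Ioi 0)
    (u : ℝ → ℝ)
    (hu_diff : ∀ x ∈ I, DifferentiableAt ℝ u x)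
    (hu_cont : ContinuousOn (deriv u) I)
    (hode : ∀ x ∈ I, HasDerivAt (fun t => t ^ (N - 1) * phip p (deriv u t))
      (-(x ^ (N - 1)) * g (u x)) x) :
    ∀ a : ℝ, ∀ x ∈ I,
      HasDerivAt
        (fun t => t ^ N * (|deriv u t| ^ p / (p / (p - 1)) + ∫ σ in (1:ℝ)..u t, g σ) +
          a * t ^ (N - 1) * u t * phip p (deriv u t))
        (x ^ (N - 1) * ((1 - (N : ℝ) / p + a) * |deriv u x| ^ p +
          (N : ℝ) * (∫ σ in (1:ℝ)..u x, g σ) - a * g (u x) * u x)) x := by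
  intro a x hx
  have hu := (hu_diff x hx).hasDerivAt
  have hG := (hg.integral_hasStrictDerivAt 1 (u x)).hasDerivAt
  simpa [← hasDerivWithinAt_univ, conjExponent, ← rpow_natCast, Nat.cast_sub hN] using
    stmt16_general (.conjExponent hp) N (hIpos hx) (hu.hasDerivWithinAt (s := univ)) hG
      (by simpa [← rpow_natCast, Nat.cast_sub hN] using hode x hx) a
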